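/- arXiv:1012.5088 — 5 statements merged into one kernel-verified Lean document; each statement's English description precedes it below -/
import Mathlib

section
/- (Lemma 3.1, second inequality.) Let q > 1/3. Then there exists a constant C > 0, depending only on q, such that for all a₀, a₁, a₂ ∈ ℝ one has ∫_ℝ dx / (1 + |a₀ + a₁|x| + a₂x² + |x|³|)^q ≤ C, uniformly in the coefficients a₀, a₁, a₂. -/
/-!
Over `ℂ` the monic cubic factors as `(t - z₁)(t - z₂)(t - z₃)`. For real `t`, each factor is at
least `|t - Re zᵢ|` in absolute value, so the cubic is bounded below by `d ^ 3`, where `d` is the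
distance from `t` to the nearest of the three real numbers `rᵢ = Re zᵢ`. Since
`(1 + d) ^ 3 ≤ 4 (1 + d ^ 3)`, the integrand at `t = |x|` is at most
`4 ^ q * ∑ i, (1 + |t - rᵢ|) ^ (-3q)`. Replacing `|x|` by both `x` and `-x` bounds the integrand by
six translates and reflections of `x ↦ 4 ^ q * (1 + |x|) ^ (-3q)`, which is integrable as `3q > 1`;
its integral does not see the shifts `rᵢ`, hence not the coefficients.
-/

open MeasureTheory

/-- A monic real cubic is bounded below on the real line by a product of three distances: `r₁`,
`r₂`, `r₃` are the real parts of its complex roots. -/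
lemma exists_prod_abs_sub_le_cubic (a₀ a₁ a₂ : ℝ) : ∃ r₁ r₂ r₃ : ℝ, ∀ t : ℝ,
    |t - r₁| * |t - r₂| * |t - r₃| ≤ |a₀ + a₁ * t + a₂ * t ^ 2 + t ^ 3| := by
  let P : Cubic ℂ := ⟨1, a₂, a₁, a₀⟩
  have ha : P.a ≠ 0 := one_ne_zero
  obtain ⟨z₁, z₂, z₃, h⟩ := (Cubic.splits_iff_roots_eq_three (φ := RingHom.id ℂ) ha).1
    (IsAlgClosed.splits _)
  have hb := Cubic.b_eq_three_roots ha h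
  have hc := Cubic.c_eq_three_roots ha h
  have hd := Cubic.d_eq_three_roots ha h
  simp only [P, RingHom.id_apply] at hb hc hd
  refine ⟨z₁.re, z₂.re, z₃.re, fun t => ?_⟩
  have key : ((a₀ + a₁ * t + a₂ * t ^ 2 + t ^ 3 : ℝ) : ℂ)
      = (t - z₁) * (t - z₂) * (t - z₃) := by
    push_cast
    rw [hb, hc, hd]
    ring
  have hre : ∀ z : ℂ, |t - z.re| ≤ ‖(t : ℂ) - z‖ := fun z => by
    simpa using Complex.abs_re_le_norm ((t : ℂ) - z)
  rw [← Real.norm_eq_abs (a₀ + _ + _ + _), ← Complex.norm_real, key, norm_mul, norm_mul]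
  gcongr <;> exact hre _

/-- Passes from a cubic lower bound for `y` to a power of `1 + d`, via `(1 + d) ^ 3 ≤ 4 (1 + d ^ 3)`. -/
lemma rpow_neg_le_of_cube_le {q d y : ℝ} (hq : 0 < q) (hd : 0 ≤ d) (h : d ^ 3 ≤ y) :
    (1 + y) ^ (-q) ≤ 4 ^ q * (1 + d) ^ (-(3 * q)) := by
  have h1 : (1 + d) ^ 3 / 4 ≤ 1 + y := by
    nlinarith [mul_nonneg (add_nonneg zero_le_one hd) (sq_nonneg (d - 1))]
  calc (1 + y) ^ (-q) ≤ ((1 + d) ^ 3 / 4) ^ (-q) :=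
        Real.rpow_le_rpow_of_nonpos (by positivity) h1 (by linarith)
    _ = 4 ^ q * (1 + d) ^ (-(3 * q)) := by
        rw [Real.div_rpow (by positivity) (by norm_num), ← Real.rpow_natCast,
          ← Real.rpow_mul (by positivity), Real.rpow_neg (by norm_num : (0 : ℝ) ≤ 4), div_inv_eq_mul,
          mul_comm]
        norm_num

lemma min_cube_le_prod {a b c : ℝ} (ha : 0 ≤ a) (hb : 0 ≤ b) (hc : 0 ≤ c) :
    a ^ 3 ≤ a * b * c ∨ b ^ 3 ≤ a * b * c ∨ c ^ 3 ≤ a * b * c := by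
  have key : ∀ m : ℝ, 0 ≤ m → m ≤ a → m ≤ b → m ≤ c → m ^ 3 ≤ a * b * c := fun m _ _ _ _ =>
    calc m ^ 3 = m * m * m := by ring
      _ ≤ a * b * c := by gcongr
  rcases le_total a b with hab | hab <;> rcases le_total b c with hbc | hbc <;>
    rcases le_total a c with hac | hac
  · exact .inl (key a ha le_rfl hab hac)
  · exact .inl (key a ha le_rfl hab (hab.trans hbc))
  · exact .inl (key a ha le_rfl hab hac)
  · exact .inr (.inr (key c hc hac hbc le_rfl))
  · exact .inr (.inl (key b hb hab le_rfl hbc))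
  · exact .inr (.inl (key b hb hab le_rfl hbc))
  · exact .inr (.inr (key c hc (hbc.trans hab) hbc le_rfl))
  · exact .inr (.inr (key c hc hac hbc le_rfl))

/-- Lemma 3.1, second inequality: a uniform bound for integrals against
cubic-type weights with leading coefficient one. -/
theorem calculus_inequality_two (q : ℝ) (hq : 1/3 < q) :
    ∃ C > 0, ∀ a₀ a₁ a₂ : ℝ,
      (∫ x : ℝ, (1 + |a₀ + a₁ * |x| + a₂ * x^2 + |x|^3|) ^ (-q)) ≤ C := by
  have hq0 : 0 < q := by linarith
  set g : ℝ → ℝ := fun x => 4 ^ q * (1 + |x|) ^ (-(3 * q)) with hg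
  have hg0 : ∀ x, 0 ≤ g x := fun x => by positivity
  have hgi : Integrable g := by
    have h := integrable_one_add_norm (E := ℝ) (μ := volume) (r := 3 * q)
      (by rw [Module.finrank_self]; push_cast; linarith)
    simpa only [Real.norm_eq_abs] using h.const_mul (4 ^ q)
  -- The extra `1` only serves to make the constant visibly positive.
  refine ⟨6 * (∫ x, g x) + 1, by
    have : 0 ≤ ∫ x, g x := integral_nonneg fun x => hg0 x
    positivity,
    fun a₀ a₁ a₂ => ?_⟩
  obtain ⟨r₁, r₂, r₃, hr⟩ := exists_prod_abs_sub_le_cubic a₀ a₁ a₂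
  -- `g` is even, so `g (r + x) = g (-x - r)` and `g (r - x) = g (x - r)`.
  have habs : ∀ r x : ℝ, g (|x| - r) ≤ g (r + x) + g (r - x) := fun r x => by
    have e : ∀ u : ℝ, g (-u) = g u := fun u => by simp [hg]
    rcases abs_choice x with h | h
    · rw [h, ← e (x - r), neg_sub]
      linarith [hg0 (r + x)]
    · rw [h, ← e (-x - r), show -(-x - r) = r + x by ring]
      linarith [hg0 (r - x)]
  have hi : ∀ r : ℝ, Integrable fun x => g (r + x) + g (r - x) := fun r =>
    (hgi.comp_add_left r).add (hgi.comp_sub_left r)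
  have hv : ∀ r : ℝ, (∫ x, (g (r + x) + g (r - x))) = 2 * ∫ x, g x := fun r => by
    rw [integral_add (hgi.comp_add_left r) (hgi.comp_sub_left r),
      integral_add_left_eq_self g r, integral_sub_left_eq_self g volume r]
    ring
  have hpt : ∀ x : ℝ, (1 + |a₀ + a₁ * |x| + a₂ * x^2 + |x|^3|) ^ (-q)
      ≤ (g (r₁ + x) + g (r₁ - x)) + (g (r₂ + x) + g (r₂ - x)) + (g (r₃ + x) + g (r₃ - x)) := by
    intro x
    have hx := hr |x|
    rw [sq_abs] at hx
    have h0 : ∀ r, 0 ≤ g (r + x) + g (r - x) := fun r => add_nonneg (hg0 _) (hg0 _)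
    have hb : ∀ r, |(|x| - r)| ^ 3 ≤ |(|x| - r₁)| * |(|x| - r₂)| * |(|x| - r₃)| →
        (1 + |a₀ + a₁ * |x| + a₂ * x^2 + |x|^3|) ^ (-q) ≤ g (r + x) + g (r - x) := fun r h =>
      (rpow_neg_le_of_cube_le hq0 (abs_nonneg _) (h.trans hx)).trans (habs r x)
    rcases min_cube_le_prod (abs_nonneg (|x| - r₁)) (abs_nonneg (|x| - r₂))
      (abs_nonneg (|x| - r₃)) with h | h | h
    · linarith [hb _ h, h0 r₂, h0 r₃]
    · linarith [hb _ h, h0 r₁, h0 r₃]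
    · linarith [hb _ h, h0 r₁, h0 r₂]
  calc _ ≤ ∫ x, ((g (r₁ + x) + g (r₁ - x)) + (g (r₂ + x) + g (r₂ - x))
            + (g (r₃ + x) + g (r₃ - x))) :=
        integral_mono_of_nonneg (.of_forall fun x => by positivity)
          (((hi r₁).add (hi r₂)).add (hi r₃)) (.of_forall hpt)
    _ = 6 * ∫ x, g x := by
        have h12 : Integrable fun x => (g (r₁ + x) + g (r₁ - x)) + (g (r₂ + x) + g (r₂ - x)) :=
          (hi r₁).add (hi r₂)
        rw [integral_add h12 (hi r₃), integral_add (hi r₁) (hi r₂),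
          hv, hv, hv]
        ring
    _ ≤ _ := by linarith
end

section
/- (Lemma 3.2.) Let β ∈ {−1,1}. There exists a constant c ≥ 1 such that for all x, y ≥ 0 one has both (1 + |x − y^{3/2} + (β/2)y^{1/2}|) ≤ c (1 + |x − √(y − βy² + y³)|) and (1 + |x − √(y − βy² + y³)|) ≤ c (1 + |x − y^{3/2} + (β/2)y^{1/2}|). -/
/-!
Put `s = √y`, `A = s³ - (β/2) s` and `B = √(s² - β s⁴ + s⁶)`. Since `β² = 1`, the radicand is
`A² + (3/4) s²`. Hence `A ≤ B`, and `B ≤ A + 2` because `(A + 2)² - A² = 4 A + 4 ≥ (3/4) s²` for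
`s ≥ 0`. So `|A - B| ≤ 2`, and the triangle inequality gives both comparisons with `c = 3`.
-/

theorem sqrt_sub_cubic_bounds (β : ℝ) (hβ : β = 1 ∨ β = -1) (s : ℝ) (hs : 0 ≤ s) :
    s ^ 3 - β / 2 * s ≤ √(s ^ 2 - β * (s ^ 2) ^ 2 + (s ^ 2) ^ 3) ∧
      √(s ^ 2 - β * (s ^ 2) ^ 2 + (s ^ 2) ^ 3) ≤ s ^ 3 - β / 2 * s + 2 := by
  have hid : s ^ 2 - β * (s ^ 2) ^ 2 + (s ^ 2) ^ 3 =
      (s ^ 3 - β / 2 * s) ^ 2 + 3 / 4 * s ^ 2 := by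
    rcases hβ with rfl | rfl <;> ring
  -- Tangent line of the cubic at `s = 1`.
  have h3 : 3 * s - 2 ≤ s ^ 3 := by
    nlinarith [mul_nonneg hs (sq_nonneg (s - 1)), sq_nonneg (s - 1)]
  have h2 : 2 * s ^ 2 - s ≤ s ^ 3 := by nlinarith [mul_nonneg hs (sq_nonneg (s - 1))]
  have hlin : β / 2 * s ≤ s / 2 := by
    rcases hβ with rfl | rfl <;> linarith
  rw [hid]
  constructor
  · exact Real.le_sqrt_of_sq_le (by nlinarith [sq_nonneg s])
  · have hA : 3 / 4 * s ^ 2 ≤ 4 * (s ^ 3 - β / 2 * s) + 4 := by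
      nlinarith [sq_nonneg (s - 1)]
    exact Real.sqrt_le_iff.mpr ⟨by linarith, by nlinarith⟩

/-- Lemma 3.2: two-sided comparison of the Boussinesq weight
`1 + |x - √(y - βy² + y³)|` with the KdV-type weight
`1 + |x - y^{3/2} + (β/2) y^{1/2}|`, uniformly in `x, y ≥ 0`. -/
theorem weight_comparison (β : ℝ) (hβ : β = 1 ∨ β = -1) :
    ∃ c : ℝ, 1 ≤ c ∧ ∀ x y : ℝ, 0 ≤ x → 0 ≤ y →
      (1 + |x - y ^ ((3:ℝ)/2) + (β/2) * y ^ ((1:ℝ)/2)| ≤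
        c * (1 + |x - Real.sqrt (y - β*y^2 + y^3)|)) ∧
      (1 + |x - Real.sqrt (y - β*y^2 + y^3)| ≤
        c * (1 + |x - y ^ ((3:ℝ)/2) + (β/2) * y ^ ((1:ℝ)/2)|)) := by
  refine ⟨3, by norm_num, fun x y _ hy => ?_⟩
  have h1 : y ^ ((1:ℝ)/2) = √y := (Real.sqrt_eq_rpow y).symm
  have h3 : y ^ ((3:ℝ)/2) = √y ^ 3 := by
    rw [← h1, ← Real.rpow_natCast, ← Real.rpow_mul hy]
    norm_num
  obtain ⟨hl, hu⟩ := sqrt_sub_cubic_bounds β hβ √y (Real.sqrt_nonneg y)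
  rw [Real.sq_sqrt hy] at hl hu
  rw [h1, h3]
  set B := √(y - β * y ^ 2 + y ^ 3)
  constructor
  · have : |x - √y ^ 3 + β / 2 * √y| ≤ |x - B| + 2 := by
      rw [abs_le]
      constructor <;> linarith [neg_abs_le (x - B), le_abs_self (x - B)]
    linarith [abs_nonneg (x - B)]
  · have : |x - B| ≤ |x - √y ^ 3 + β / 2 * √y| + 2 := by
      rw [abs_le]
      constructor <;> linarith [neg_abs_le (x - √y ^ 3 + β / 2 * √y),
        le_abs_self (x - √y ^ 3 + β / 2 * √y)]
    linarith [abs_nonneg (x - √y ^ 3 + β / 2 * √y)]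
end

section
/- (Remark 3.1: equivalence of Bourgain weights.) Let β ∈ {−1,1} and b ∈ ℝ. There exists a constant c ≥ 1, depending only on b, such that for all (τ, ξ) ∈ ℝ² one has c⁻¹ ⟨|τ| − |ξ|³ + (β/2)|ξ|⟩^b ≤ ⟨|τ| − γ(ξ)⟩^b ≤ c ⟨|τ| − |ξ|³ + (β/2)|ξ|⟩^b. -/
/-!
With `x = |ξ|` and `p = x³ - (β/2) x`, the identity `γ² - p² = (3/4) x²` gives
`p ≤ γ`, while `(3/4) x² ≤ 2 p + 1` on `x ≥ 0` gives `γ ≤ p + 1`. So the two symbols differ by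
at most `1`, the two weights `1 + |·|` are within a factor `2` of each other, and their `b`-th
powers are within a factor `2 ^ |b|`.
-/

/-- The absolute value in the exponent handles the order reversal for `b < 0`. -/
lemma rpow_le_two_rpow_abs_mul {A B : ℝ} (b : ℝ) (hA : 0 < A) (hB : 0 < B)
    (hAB : A ≤ 2 * B) (hBA : B ≤ 2 * A) : A ^ b ≤ (2 : ℝ) ^ |b| * B ^ b := by
  rcases le_total 0 b with hb | hb
  · rw [abs_of_nonneg hb, ← Real.mul_rpow (by norm_num) hB.le]
    exact Real.rpow_le_rpow hA.le hAB hb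
  · have h := Real.rpow_le_rpow_of_nonpos hB hBA hb
    rw [Real.mul_rpow (by norm_num) hA.le] at h
    rw [abs_of_nonpos hb, Real.rpow_neg (by norm_num), inv_mul_eq_div,
      le_div_iff₀ (by positivity), mul_comm]
    exact h

lemma abs_sqrt_sub_symbol_le_one {β : ℝ} (hβ : β = 1 ∨ β = -1) (ξ : ℝ) :
    |√(ξ^2 - β*ξ^4 + ξ^6) - (|ξ|^3 - (β/2) * |ξ|)| ≤ 1 := by
  have hx : 0 ≤ |ξ| := abs_nonneg ξ
  have h2 : ξ^2 = |ξ|^2 := (sq_abs ξ).symm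
  have h4 : ξ^4 = |ξ|^4 := by rw [show ξ^4 = (ξ^2)^2 by ring, h2]; ring
  have h6 : ξ^6 = |ξ|^6 := by rw [show ξ^6 = (ξ^2)^3 by ring, h2]; ring
  rw [h2, h4, h6]
  generalize |ξ| = x at hx
  have hβ2 : β^2 = 1 := by rcases hβ with rfl | rfl <;> norm_num
  have hid : x^2 - β*x^4 + x^6 = (x^3 - (β/2)*x)^2 + 3/4 * x^2 := by
    linear_combination (-(x^2)/4) * hβ2
  -- `11/20` is close to the minimiser of `2 x³ - (3/4) x² - x + 1` on `x ≥ 0`.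
  have hpos : 3/4 * x^2 ≤ 2 * (x^3 - (β/2)*x) + 1 := by
    rcases hβ with rfl | rfl <;>
      nlinarith [mul_nonneg hx (sq_nonneg (x - 11/20)), sq_nonneg (x - 11/20)]
  rw [hid, abs_le]
  constructor
  · have := Real.le_sqrt_of_sq_le
      (show (x^3 - (β/2)*x)^2 ≤ (x^3 - (β/2)*x)^2 + 3/4 * x^2 by nlinarith [sq_nonneg x])
    linarith
  · have : √((x^3 - (β/2)*x)^2 + 3/4 * x^2) ≤ (x^3 - (β/2)*x) + 1 :=
      Real.sqrt_le_iff.2 ⟨by nlinarith [sq_nonneg x], by nlinarith⟩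
    linarith


/-- Remark 3.1: pointwise equivalence of the Bourgain weights
`⟨|τ| - γ(ξ)⟩^b` and `⟨|τ| - |ξ|³ + (β/2)|ξ|⟩^b`, where
`γ(ξ) = √(ξ² - βξ⁴ + ξ⁶)`. -/
theorem bourgain_weight_equivalence (β : ℝ) (hβ : β = 1 ∨ β = -1) (b : ℝ) :
    ∃ c : ℝ, 1 ≤ c ∧ ∀ τ ξ : ℝ,
      c⁻¹ * (1 + abs (abs τ - (abs ξ)^3 + (β/2) * abs ξ)) ^ b ≤
        (1 + abs (abs τ - Real.sqrt (ξ^2 - β*ξ^4 + ξ^6))) ^ b ∧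
      (1 + abs (abs τ - Real.sqrt (ξ^2 - β*ξ^4 + ξ^6))) ^ b ≤
        c * (1 + abs (abs τ - (abs ξ)^3 + (β/2) * abs ξ)) ^ b := by
  refine ⟨2 ^ |b|, Real.one_le_rpow (by norm_num) (abs_nonneg b), fun τ ξ => ?_⟩
  have hd := abs_sqrt_sub_symbol_le_one hβ ξ
  set g := √(ξ^2 - β*ξ^4 + ξ^6)
  set P := |τ| - |ξ|^3 + (β/2) * |ξ| with hP
  have h1 : |P| ≤ |(|τ| - g)| + 1 := by
    have := abs_add_le (|τ| - g) (g - (|ξ|^3 - (β/2) * |ξ|))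
    rw [show |τ| - g + (g - (|ξ|^3 - (β/2) * |ξ|)) = P by rw [hP]; ring] at this
    linarith
  have h2 : |(|τ| - g)| ≤ |P| + 1 := by
    have := abs_sub P (g - (|ξ|^3 - (β/2) * |ξ|))
    rw [show P - (g - (|ξ|^3 - (β/2) * |ξ|)) = |τ| - g by rw [hP]; ring] at this
    linarith
  have h3 := abs_nonneg P
  have h4 := abs_nonneg (|τ| - g)
  constructor
  · rw [inv_mul_le_iff₀ (by positivity)]
    exact rpow_le_two_rpow_abs_mul b (by linarith) (by linarith) (by linarith) (by linarith)
  · exact rpow_le_two_rpow_abs_mul b (by linarith) (by linarith) (by linarith) (by linarith)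
end

section
/- (Lower bound for the oscillatory kernel K.) Let A, B, C ≥ 0 and t > 0 satisfy tA ≤ 1, tB ≤ 1 and tC ≤ 1. Then ∫₀ᵗ sin((t − t′)A) · cos(t′B) · cos(t′C) dt′ ≥ A t² / 16. -/
/-!
All three arguments `(t - t') A`, `t' B`, `t' C` lie in `[0, 1]`, where `x / 2 ≤ sin x` and
`1 / 2 ≤ cos x`. Hence the integrand is at least `(t - t') A / 8`, whose integral over `[0, t]` is
exactly `A t ^ 2 / 16`.
-/

theorem half_le_cos_of_mem {x : ℝ} (h0 : 0 ≤ x) (h1 : x ≤ 1) : 1 / 2 ≤ Real.cos x := by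
  have h := Real.one_sub_sq_div_two_le_cos (x := x)
  nlinarith

/-- Jordan's inequality `2 / π * x ≤ sin x`, weakened through `π ≤ 4`. -/
theorem half_le_sin_of_mem {x : ℝ} (h0 : 0 ≤ x) (h1 : x ≤ 1) : x / 2 ≤ Real.sin x := by
  have h := Real.mul_le_sin h0 (h1.trans Real.one_le_pi_div_two)
  have h2 : 1 / 2 ≤ 2 / Real.pi := by
    rw [div_le_div_iff₀ two_pos Real.pi_pos]
    linarith [Real.pi_le_four]
  nlinarith

/-- Lower bound for the oscillatory kernel
`K = ∫₀ᵗ sin((t-t')A) cos(t'B) cos(t'C) dt'` when `tA, tB, tC ≤ 1`. -/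
theorem kernel_lower_bound (A B C t : ℝ) (hA : 0 ≤ A) (hB : 0 ≤ B) (hC : 0 ≤ C)
    (ht : 0 < t) (h1 : t * A ≤ 1) (h2 : t * B ≤ 1) (h3 : t * C ≤ 1) :
    A * t^2 / 16 ≤
      ∫ t' in (0:ℝ)..t,
        Real.sin ((t - t') * A) * Real.cos (t' * B) * Real.cos (t' * C) := by
  have hint : ∫ s in (0:ℝ)..t, (t - s) * (A / 8) = A * t^2 / 16 := by
    rw [intervalIntegral.integral_mul_const, intervalIntegral.integral_sub (by simp) (by simp)]
    simp
    ring
  rw [← hint]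
  apply intervalIntegral.integral_mono_on ht.le
  · exact Continuous.intervalIntegrable (by fun_prop) _ _
  · exact Continuous.intervalIntegrable (by fun_prop) _ _
  · rintro s ⟨hs0, hst⟩
    have hts : 0 ≤ t - s := sub_nonneg.2 hst
    have hsin := half_le_sin_of_mem (x := (t - s) * A) (by positivity) (by nlinarith)
    have hcosB := half_le_cos_of_mem (x := s * B) (by positivity) (by nlinarith)
    have hcosC := half_le_cos_of_mem (x := s * C) (by positivity) (by nlinarith)
    have hsin0 : 0 ≤ Real.sin ((t - s) * A) := le_trans (by positivity) hsin
    calc (t - s) * (A / 8) = (t - s) * A / 2 * (1 / 2) * (1 / 2) := by ring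
      _ ≤ Real.sin ((t - s) * A) * Real.cos (s * B) * Real.cos (s * C) := by gcongr
end

section
/- (Lemma 2.2(i): time-localized integration estimate.) Let −1/2 < b′ ≤ 0 ≤ b ≤ b′ + 1, and let θ ∈ C_c^∞(ℝ) satisfy 0 ≤ θ ≤ 1, θ ≡ 1 on [−1, 1] and supp θ ⊆ [−2, 2]. Then there exists c > 0, depending only on θ, b, b′, such that for every 0 < T ≤ 1 and every Schwartz function g : ℝ → ℂ, the function F(t) = θ(t/T) ∫₀ᵗ g(t′) dt′ satisfies ( ∫_ℝ (1 + |τ|)^{2b} |𝓕F(τ)|² dτ )^{1/2} ≤ c T^{1−(b−b′)} ( ∫_ℝ (1 + |τ|)^{2b′} |𝓕g(τ)|² dτ )^{1/2}, where 𝓕 denotes the Fourier transform on ℝ. -/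
/-!
Write `h = 𝓕 g`. Fourier inversion and Fubini give `𝓕 F(τ) = ∫ K(τ, ξ) h(ξ) dξ` with
`K(τ, ξ) = T (θ̂(Tτ - Tξ) - θ̂(Tτ)) / (2πiξ)` (`fourier_localized_primitive`). Since `θ̂` is
Schwartz, the decay of `θ̂` for `|y| ≥ 1` and the mean value inequality for `|y| ≤ 1` give
`|θ̂(x - y) - θ̂(x)| / |y| ≲ ⟨y⟩⁻¹ (⟨x - y⟩⁻³ + ⟨x⟩⁻³)`, where `⟨x⟩ = 1 + |x|` (`kernel_bound`).

Put `x = Tτ`, `y = Tξ`. As `T ≤ 1` and `b' ≤ 0 ≤ b`, passing from the weights at `τ, ξ` to those at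
`x, y` costs `T ^ (b' - b)`. Peetre's inequality `⟨x⟩ ≤ ⟨y⟩⟨x - y⟩` together with `b ≤ b' + 1` then
bounds the weighted kernel by `T ^ (2 + b' - b) (⟨x - y⟩⁻² + ⟨x⟩⁻² ⟨y⟩ ^ (-(1 + b')))`
(`weighted_kernel_bound`): a convolution kernel in `L¹` plus a rank-one kernel, which is in
`L² ⊗ L²` because `b' > -1/2`. Both act boundedly on `L²` (`sq_lintegral_kernel_le`), and dilating
by `T` in both variables contributes a factor `T⁻¹` to the operator norm, so that the total power
is `T ^ (1 - (b - b'))`.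

The `L²` bounds are carried out with `ℝ≥0∞`-valued integrals, so that no integrability has to be
checked for the intermediate quantities.
-/

/-! ### Kernel operators on `L²` -/

open MeasureTheory
open scoped FourierTransform

/-- Cauchy–Schwarz inequality. -/
theorem sq_lintegral_mul_le {f g : ℝ → ENNReal} (hf : Measurable f) (hg : Measurable g) :
    (∫⁻ x, f x * g x) ^ 2 ≤ (∫⁻ x, f x ^ 2) * ∫⁻ x, g x ^ 2 := by
  have h := ENNReal.lintegral_mul_le_Lp_mul_Lq volume Real.HolderConjugate.two_two
    hf.aemeasurable hg.aemeasurable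
  simp only [Pi.mul_apply, ENNReal.rpow_two] at h
  calc (∫⁻ x, f x * g x) ^ 2
      ≤ ((∫⁻ x, f x ^ 2) ^ ((1:ℝ)/2) * (∫⁻ x, g x ^ 2) ^ ((1:ℝ)/2)) ^ 2 := by gcongr
    _ = _ := by
      rw [mul_pow, ← ENNReal.rpow_two, ← ENNReal.rpow_two, ← ENNReal.rpow_mul,
        ← ENNReal.rpow_mul]
      norm_num

/-- Young's inequality `‖A ∗ u‖₂ ≤ ‖A‖₁ ‖u‖₂`, by Cauchy–Schwarz with `A = √A · √A`. -/
theorem sq_lintegral_conv_le {A u : ℝ → ENNReal} (hA : Measurable A) (hu : Measurable u) :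
    ∫⁻ τ, (∫⁻ ξ, A (τ - ξ) * u ξ) ^ 2 ≤ (∫⁻ x, A x) ^ 2 * ∫⁻ ξ, u ξ ^ 2 := by
  have hsq : ∀ x, (A x ^ ((1:ℝ)/2)) ^ 2 = A x := fun x => by
    rw [← ENNReal.rpow_two, ← ENNReal.rpow_mul]; norm_num
  have h1 : ∀ τ, (∫⁻ ξ, A (τ - ξ) * u ξ) ^ 2
      ≤ (∫⁻ x, A x) * ∫⁻ ξ, A (τ - ξ) * u ξ ^ 2 := by
    intro τ
    have := sq_lintegral_mul_le (f := fun ξ => A (τ - ξ) ^ ((1:ℝ)/2))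
      (g := fun ξ => A (τ - ξ) ^ ((1:ℝ)/2) * u ξ) (by fun_prop) (by fun_prop)
    simp only [mul_pow, hsq, ← mul_assoc, ← pow_two] at this
    rwa [lintegral_sub_left_eq_self A τ] at this
  calc ∫⁻ τ, (∫⁻ ξ, A (τ - ξ) * u ξ) ^ 2
      ≤ ∫⁻ τ, (∫⁻ x, A x) * ∫⁻ ξ, A (τ - ξ) * u ξ ^ 2 := lintegral_mono h1
    _ = (∫⁻ x, A x) * ∫⁻ τ, ∫⁻ ξ, A (τ - ξ) * u ξ ^ 2 := by
      rw [lintegral_const_mul]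
      exact Measurable.lintegral_prod_right' (f := fun p : ℝ × ℝ => A (p.1 - p.2) * u p.2 ^ 2)
        (by fun_prop)
    _ = (∫⁻ x, A x) * ∫⁻ ξ, ∫⁻ τ, A (τ - ξ) * u ξ ^ 2 := by
      rw [lintegral_lintegral_swap]
      exact Measurable.aemeasurable (by unfold Function.uncurry; fun_prop)
    _ = (∫⁻ x, A x) * ∫⁻ ξ, (∫⁻ x, A x) * u ξ ^ 2 := by
      congr 1
      refine lintegral_congr fun ξ => ?_
      rw [lintegral_mul_const _ (by fun_prop), lintegral_sub_right_eq_self A ξ]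
    _ = _ := by
      rw [lintegral_const_mul _ (by fun_prop)]; ring

/-- `L²` bound for an integral operator whose kernel is a convolution kernel plus a rank-one
kernel. -/
theorem sq_lintegral_kernel_le {A B D u : ℝ → ENNReal} (hA : Measurable A) (hB : Measurable B)
    (hD : Measurable D) (hu : Measurable u) :
    ∫⁻ τ, (∫⁻ ξ, (A (τ - ξ) + B τ * D ξ) * u ξ) ^ 2
      ≤ 2 * ((∫⁻ x, A x) ^ 2 + (∫⁻ x, B x ^ 2) * ∫⁻ x, D x ^ 2) * ∫⁻ ξ, u ξ ^ 2 := by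
  have h2 : ∀ a b : ENNReal, (a + b) ^ 2 ≤ 2 * a ^ 2 + 2 * b ^ 2 := by
    intro a b
    have := ENNReal.rpow_add_le_mul_rpow_add_rpow a b (p := 2) (by norm_num)
    norm_num at this
    rwa [mul_add] at this
  have hm : Measurable fun τ => ∫⁻ ξ, A (τ - ξ) * u ξ :=
    Measurable.lintegral_prod_right' (f := fun p : ℝ × ℝ => A (p.1 - p.2) * u p.2) (by fun_prop)
  calc ∫⁻ τ, (∫⁻ ξ, (A (τ - ξ) + B τ * D ξ) * u ξ) ^ 2
      = ∫⁻ τ, ((∫⁻ ξ, A (τ - ξ) * u ξ) + B τ * ∫⁻ ξ, D ξ * u ξ) ^ 2 := by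
        refine lintegral_congr fun τ => ?_
        rw [← lintegral_const_mul _ (by fun_prop), ← lintegral_add_left (by fun_prop)]
        congr 1
        refine lintegral_congr fun ξ => ?_
        ring
    _ ≤ ∫⁻ τ, (2 * (∫⁻ ξ, A (τ - ξ) * u ξ) ^ 2 + 2 * (B τ ^ 2 * (∫⁻ ξ, D ξ * u ξ) ^ 2)) := by
        refine lintegral_mono fun τ => (h2 _ _).trans_eq ?_
        rw [mul_pow]
    _ = 2 * (∫⁻ τ, (∫⁻ ξ, A (τ - ξ) * u ξ) ^ 2)
          + 2 * ((∫⁻ τ, B τ ^ 2) * (∫⁻ ξ, D ξ * u ξ) ^ 2) := by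
        rw [lintegral_add_left (by fun_prop), lintegral_const_mul _ (by fun_prop),
          lintegral_const_mul _ (by fun_prop), lintegral_mul_const _ (by fun_prop)]
    _ ≤ 2 * ((∫⁻ x, A x) ^ 2 * ∫⁻ ξ, u ξ ^ 2)
          + 2 * ((∫⁻ τ, B τ ^ 2) * ((∫⁻ ξ, D ξ ^ 2) * ∫⁻ ξ, u ξ ^ 2)) := by
        gcongr
        · exact sq_lintegral_conv_le hA hu
        · exact sq_lintegral_mul_le hD hu
    _ = _ := by ring

/-! ### Bounds on the kernel -/

theorem schwartz_decay (f : SchwartzMap ℝ ℂ) :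
    ∃ C, 0 < C ∧ ∀ x, ‖f x‖ ≤ C * (1 + |x|) ^ (-3 : ℝ) := by
  set C := 2 ^ 3 * ((Finset.Iic ((3, 0) : ℕ × ℕ)).sup
    fun m => SchwartzMap.seminorm ℝ (E := ℝ) (F := ℂ) m.1 m.2) f
  have hC : 0 ≤ C := by positivity
  refine ⟨C + 1, by positivity, fun x => ?_⟩
  have h := SchwartzMap.one_add_le_sup_seminorm_apply (𝕜 := ℝ) (m := (3, 0)) (k := 3) (n := 0)
    le_rfl le_rfl f x
  rw [norm_iteratedFDeriv_zero, Real.norm_eq_abs] at h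
  have hx : 0 < 1 + |x| := by positivity
  rw [Real.rpow_neg hx.le, ← div_eq_mul_inv, le_div_iff₀ (by positivity)]
  have : (1 + |x|) ^ (3:ℝ) = (1 + |x|) ^ (3:ℕ) := by norm_cast
  rw [this]
  change _ ≤ C at h
  linarith

/-- The difference quotient of a Schwartz function `G` with step `y` stays bounded as `y → 0`, decays
like `1 / |y|` for large `|y|`, and is concentrated near `x = 0` and `x = y`. -/
theorem kernel_bound (G : SchwartzMap ℝ ℂ) :
    ∃ C, 0 < C ∧ ∀ x y : ℝ, y ≠ 0 → ‖G (x - y) - G x‖ / (2 * Real.pi * |y|)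
      ≤ C * ((1 + |y|) ^ (-1 : ℝ) * ((1 + |x - y|) ^ (-3 : ℝ) + (1 + |x|) ^ (-3 : ℝ))) := by
  obtain ⟨C₀, hC₀, h₀⟩ := schwartz_decay G
  obtain ⟨C₁, hC₁, h₁⟩ := schwartz_decay (SchwartzMap.derivCLM ℝ ℂ G)
  refine ⟨2 * C₀ + 16 * C₁, by positivity, fun x y hy => ?_⟩
  have hy' : 0 < |y| := abs_pos.2 hy
  have hpi : 1 ≤ 2 * Real.pi := by linarith [Real.pi_gt_three]
  set a := (1 + |x - y|) ^ (-3 : ℝ) with ha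
  set c := (1 + |x|) ^ (-3 : ℝ) with hc
  have ha0 : 0 < a := by positivity
  have hc0 : 0 < c := by positivity
  rw [Real.rpow_neg_one]
  rcases le_total |y| 1 with h | h
  -- On `|z - x| ≤ 1` the weights `1 + |z|` and `1 + |x|` agree up to a factor `2`.
  · have hmv : ‖G (x - y) - G x‖ ≤ (C₁ * (8 * c)) * ‖(x - y) - x‖ := by
      refine Convex.norm_image_sub_le_of_norm_deriv_le (𝕜 := ℝ) (s := Metric.closedBall x 1)
        (fun z _ => G.differentiableAt) (fun z hz => ?_) (convex_closedBall x 1) (by simp)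
        (by simpa [Real.dist_eq] using h)
      rw [← SchwartzMap.derivCLM_apply ℝ]
      refine (h₁ z).trans ?_
      gcongr
      have hz' : |z - x| ≤ 1 := by simpa [Real.dist_eq] using hz
      have h3 : (1 + |x|) / 2 ≤ 1 + |z| := by
        have := abs_sub_abs_le_abs_sub x z
        rw [abs_sub_comm] at this
        linarith [abs_nonneg z]
      calc (1 + |z|) ^ (-3 : ℝ) ≤ ((1 + |x|) / 2) ^ (-3 : ℝ) :=
            Real.rpow_le_rpow_of_nonpos (by positivity) h3 (by norm_num)
        _ = 8 * c := by
            rw [Real.div_rpow (by positivity) (by norm_num), hc]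
            rw [Real.rpow_neg (x := 2) (by norm_num)]
            norm_num
            ring
    have h4 : ‖(x - y) - x‖ = |y| := by simp
    rw [h4] at hmv
    rw [div_le_iff₀ (by positivity)]
    have h5 : 1 / 2 ≤ (1 + |y|)⁻¹ := by
      rw [← one_div]; apply one_div_le_one_div_of_le <;> linarith
    calc ‖G (x - y) - G x‖ ≤ (16 * C₁ * ((1/2) * c)) * (1 * |y|) := by linarith
      _ ≤ ((2 * C₀ + 16 * C₁) * ((1 + |y|)⁻¹ * (a + c))) * (2 * Real.pi * |y|) := by
        gcongr <;> linarith
  · rw [div_le_iff₀ (by positivity)]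
    have h5 : 1 / 2 ≤ (1 + |y|)⁻¹ * |y| := by
      rw [inv_mul_eq_div, div_le_div_iff₀ (by norm_num) (by positivity)]; linarith
    calc ‖G (x - y) - G x‖ ≤ ‖G (x - y)‖ + ‖G x‖ := norm_sub_le _ _
      _ ≤ C₀ * a + C₀ * c := add_le_add (h₀ _) (h₀ _)
      _ = (2 * C₀ * (a + c)) * (1 / 2) * 1 := by ring
      _ ≤ ((2 * C₀ + 16 * C₁) * (a + c)) * ((1 + |y|)⁻¹ * |y|) * (2 * Real.pi) := by
        gcongr; linarith
      _ = _ := by ring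

/-- Rescaling to `Tτ, Tξ` and absorbing the weights: after the factor `(1 + |ξ|) ^ b'` is set aside,
what remains is a convolution kernel plus a rank-one kernel. -/
theorem weighted_kernel_bound {b b' : ℝ} (hb'2 : b' ≤ 0) (hb1 : 0 ≤ b) (hb2 : b ≤ b' + 1)
    {T : ℝ} (hT : 0 < T) (hT1 : T ≤ 1) (τ ξ : ℝ) :
    (1 + |τ|) ^ b * ((1 + |T * ξ|) ^ (-1 : ℝ) *
        ((1 + |T * τ - T * ξ|) ^ (-3 : ℝ) + (1 + |T * τ|) ^ (-3 : ℝ)))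
      ≤ T ^ (b' - b) * ((1 + |T * (τ - ξ)|) ^ (-2 : ℝ)
        + (1 + |T * τ|) ^ (-2 : ℝ) * (1 + |T * ξ|) ^ (-(1 + b'))) * (1 + |ξ|) ^ b' := by
  have hscale : ∀ x : ℝ, 1 + |x| ≤ T⁻¹ * (1 + |T * x|) := by
    intro x
    rw [abs_mul, abs_of_pos hT, mul_add, inv_mul_cancel_left₀ hT.ne']
    have := (one_le_inv₀ hT).2 hT1
    linarith
  set x := T * τ
  set y := T * ξ with hy
  have hxy : T * (τ - ξ) = x - y := by ring
  rw [hxy]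
  have p1 : (1 + |τ|) ^ b ≤ T ^ (-b) * (1 + |x|) ^ b := by
    rw [Real.rpow_neg hT.le, ← Real.inv_rpow hT.le, ← Real.mul_rpow (by positivity) (by positivity)]
    exact Real.rpow_le_rpow (by positivity) (hscale τ) hb1
  have p2 : T ^ (-b') * (1 + |y|) ^ b' ≤ (1 + |ξ|) ^ b' := by
    rw [Real.rpow_neg hT.le, ← Real.inv_rpow hT.le, ← Real.mul_rpow (by positivity) (by positivity)]
    exact Real.rpow_le_rpow_of_nonpos (by positivity) (hscale ξ) hb'2
  have p3 : (1 + |x|) ^ b ≤ (1 + |y|) ^ b * (1 + |x - y|) ^ b := by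
    rw [← Real.mul_rpow (by positivity) (by positivity)]
    -- Peetre inequality `1 + |x| ≤ (1 + |y|) (1 + |x - y|)`
    refine Real.rpow_le_rpow (by positivity) ?_ hb1
    have := abs_sub_abs_le_abs_sub x y
    nlinarith [abs_nonneg y, abs_nonneg (x - y)]
  have hX : 1 ≤ 1 + |x| := by linarith [abs_nonneg x]
  have hY : 1 ≤ 1 + |y| := by linarith [abs_nonneg y]
  have hZ : 1 ≤ 1 + |x - y| := by linarith [abs_nonneg (x - y)]
  set X := 1 + |x|
  set Y := 1 + |y|
  set Z := 1 + |x - y|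
  have hX0 : 0 < X := by linarith
  have hY0 : 0 < Y := by linarith
  have hZ0 : 0 < Z := by linarith
  have q1 : X ^ b * (Y ^ (-1:ℝ) * Z ^ (-3:ℝ)) ≤ Z ^ (-2:ℝ) * Y ^ b' := by
    calc X ^ b * (Y ^ (-1:ℝ) * Z ^ (-3:ℝ)) ≤ (Y ^ b * Z ^ b) * (Y ^ (-1:ℝ) * Z ^ (-3:ℝ)) := by
          gcongr
      _ = Z ^ (b - 3) * Y ^ (b - 1) := by
          rw [sub_eq_add_neg b, sub_eq_add_neg b, Real.rpow_add hZ0, Real.rpow_add hY0]; ring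
      _ ≤ _ := by
          gcongr <;> first | assumption | linarith
  have q2 : X ^ b * (Y ^ (-1:ℝ) * X ^ (-3:ℝ)) ≤ (X ^ (-2:ℝ) * Y ^ (-(1 + b'))) * Y ^ b' := by
    calc X ^ b * (Y ^ (-1:ℝ) * X ^ (-3:ℝ)) = X ^ (b - 3) * Y ^ (-1:ℝ) := by
          rw [sub_eq_add_neg b, Real.rpow_add hX0]; ring
      _ ≤ X ^ (-2:ℝ) * Y ^ (-1:ℝ) := by
          gcongr <;> first | assumption | linarith
      _ = _ := by
          rw [mul_assoc, ← Real.rpow_add hY0]; ring_nf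
  calc (1 + |τ|) ^ b * (Y ^ (-1 : ℝ) * (Z ^ (-3 : ℝ) + X ^ (-3 : ℝ)))
      ≤ (T ^ (-b) * X ^ b) * (Y ^ (-1 : ℝ) * (Z ^ (-3 : ℝ) + X ^ (-3 : ℝ))) := by gcongr
    _ = T ^ (-b) * (X ^ b * (Y ^ (-1:ℝ) * Z ^ (-3:ℝ)) + X ^ b * (Y ^ (-1:ℝ) * X ^ (-3:ℝ))) := by
        ring
    _ ≤ T ^ (-b) * (Z ^ (-2:ℝ) * Y ^ b' + (X ^ (-2:ℝ) * Y ^ (-(1 + b'))) * Y ^ b') := by gcongr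
    _ = T ^ (b' - b) * (Z ^ (-2:ℝ) + X ^ (-2:ℝ) * Y ^ (-(1 + b'))) * (T ^ (-b') * Y ^ b') := by
        have : T ^ (-b) = T ^ (b' - b) * T ^ (-b') := by
          rw [← Real.rpow_add hT]; congr 1; ring
        rw [this]; ring
    _ ≤ _ := by gcongr

/-! ### Fourier representation of the localized primitive -/

/-- The primitive of `g` in terms of `𝓕 g`. The quotient is `∫₀ᵗ exp (2πiξs) ds`; at `ξ = 0` it takes
the value `0` in place of `t`, which does not affect the integral. -/
theorem primitive_eq (g : SchwartzMap ℝ ℂ) (t : ℝ) :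
    ∫ t' in (0:ℝ)..t, g t' = ∫ ξ : ℝ, 𝓕 (⇑g) ξ *
      ((Complex.exp (Complex.I * ↑(2 * Real.pi * t * ξ)) - 1) / (2 * Real.pi * ξ * Complex.I)) := by
  have hh : Integrable (𝓕 (⇑g)) := by
    rw [← SchwartzMap.fourier_coe]; exact SchwartzMap.integrable _
  have hinv : ∀ t', g t' = ∫ ξ : ℝ, Complex.exp (2 * Real.pi * ξ * Complex.I * t') * 𝓕 (⇑g) ξ := by
    intro t'
    have h1 := congrFun (g.continuous.fourierInv_fourier_eq g.integrable hh) t'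
    rw [← h1, Real.fourierInv_eq']
    refine integral_congr_ae (Filter.Eventually.of_forall fun ξ => ?_)
    simp only [smul_eq_mul]
    congr 2
    simp
    ring
  simp_rw [hinv]
  rw [intervalIntegral_integral_swap]
  · have h0 : ∀ᵐ ξ : ℝ, ξ ≠ 0 := by simp [ae_iff, measure_singleton]
    refine integral_congr_ae ?_
    filter_upwards [h0] with ξ hξ
    have hc : (2 * Real.pi * ξ * Complex.I : ℂ) ≠ 0 := by
      simp [hξ, Real.pi_ne_zero, Complex.I_ne_zero]
    rw [intervalIntegral.integral_mul_const, integral_exp_mul_complex hc, mul_comm]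
    simp only [Complex.ofReal_zero, mul_zero, Complex.exp_zero]
    congr 4
    push_cast; ring
  · have : IsFiniteMeasure (volume.restrict (Set.uIoc 0 t)) := ⟨by simp [Set.uIoc]⟩
    have : Integrable (fun p : ℝ × ℝ => (1:ℂ) * 𝓕 (⇑g) p.2)
        ((volume.restrict (Set.uIoc 0 t)).prod volume) :=
      Integrable.mul_prod (f := fun _ => (1:ℂ)) (integrable_const _) hh
    refine this.mono ?_ (Filter.Eventually.of_forall fun p => ?_)
    · refine AEStronglyMeasurable.mul (Continuous.aestronglyMeasurable (by fun_prop)) ?_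
      simpa using this.aestronglyMeasurable
    · have h3 : (2 * Real.pi * p.2 * Complex.I * p.1 : ℂ)
        = ((2 * Real.pi * p.2 * p.1 : ℝ) : ℂ) * Complex.I := by push_cast; ring
      simp only [Function.uncurry, h3, norm_mul, Complex.norm_exp_ofReal_mul_I, norm_one, le_refl]

theorem fourier_dilate (θ : ℝ → ℂ) {T : ℝ} (hT : 0 < T) (σ : ℝ) :
    ∫ t : ℝ, Complex.exp (↑(-2 * Real.pi * t * σ) * Complex.I) * θ (t / T)
      = T * 𝓕 θ (T * σ) := by
  rw [Real.fourier_real_eq_integral_exp_smul]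
  have := Measure.integral_comp_mul_left
    (fun v : ℝ => Complex.exp (↑(-2 * Real.pi * v * (T * σ)) * Complex.I) • θ v) T⁻¹
  rw [inv_inv, abs_of_pos hT] at this
  rw [← Complex.real_smul, ← this]
  refine integral_congr_ae (Filter.Eventually.of_forall fun t => ?_)
  simp only [smul_eq_mul]
  congr 3
  · have hT' : (T:ℂ) ≠ 0 := by exact_mod_cast hT.ne'
    push_cast
    field_simp
  · field_simp

theorem fourier_localized_primitive (θ : SchwartzMap ℝ ℂ) (g : SchwartzMap ℝ ℂ)
    {T : ℝ} (hT : 0 < T) (τ : ℝ) :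
    𝓕 (fun t : ℝ => θ (t / T) * ∫ t' in (0:ℝ)..t, g t') τ
      = ∫ ξ : ℝ, 𝓕 (⇑g) ξ * (T * (𝓕 (⇑θ) (T * τ - T * ξ) - 𝓕 (⇑θ) (T * τ))
          / (2 * Real.pi * ξ * Complex.I)) := by
  have hh : Integrable (𝓕 (⇑g)) := by
    rw [← SchwartzMap.fourier_coe]; exact SchwartzMap.integrable _
  have hhm : Continuous (𝓕 (⇑g)) := by
    rw [← SchwartzMap.fourier_coe]; exact SchwartzMap.continuous _
  -- The factor `t` majorizes `∫₀ᵗ exp (2πiξs) ds` uniformly in `ξ`, so Fubini applies.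
  have hθi : Integrable (fun t : ℝ => (θ (t / T)) * t) := by
    have h1 : Integrable (fun t : ℝ => θ t * t) := by
      have := SchwartzMap.integrable_pow_mul volume θ 1
      refine this.mono (by fun_prop) (Filter.Eventually.of_forall fun t => ?_)
      simp [mul_comm]
    have h2 := (h1.comp_div hT.ne').mul_const (T:ℂ)
    refine h2.congr (Filter.Eventually.of_forall fun t => ?_)
    have : (T:ℂ) ≠ 0 := by exact_mod_cast hT.ne'
    simp
    field_simp
  have hθi0 : Integrable (fun t : ℝ => θ (t / T)) := θ.integrable.comp_div hT.ne'
  rw [Real.fourier_real_eq_integral_exp_smul]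
  simp_rw [primitive_eq, smul_eq_mul, ← integral_const_mul]
  rw [integral_integral_swap]
  · have h0 : ∀ᵐ ξ : ℝ, ξ ≠ 0 := by simp [ae_iff, measure_singleton]
    refine integral_congr_ae ?_
    filter_upwards [h0] with ξ hξ
    have e1 : T * τ - T * ξ = T * (τ - ξ) := by ring
    rw [e1, mul_sub, ← fourier_dilate _ hT, ← fourier_dilate _ hT, ← integral_sub]
    · rw [← integral_div, ← integral_const_mul]
      refine integral_congr_ae (Filter.Eventually.of_forall fun t => ?_)
      have e2 : Complex.exp (↑(-2 * Real.pi * t * (τ - ξ)) * Complex.I)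
          = Complex.exp (↑(-2 * Real.pi * t * τ) * Complex.I)
            * Complex.exp (Complex.I * ↑(2 * Real.pi * t * ξ)) := by
        rw [← Complex.exp_add]; congr 1; push_cast; ring
      simp only [e2]
      ring
    all_goals
      refine hθi0.bdd_mul (c := 1) (Continuous.aestronglyMeasurable (by fun_prop))
        (Filter.Eventually.of_forall fun t => ?_)
      rw [Complex.norm_exp_ofReal_mul_I]
  · have := Integrable.mul_prod hθi hh
    refine this.mono ?_ (Filter.Eventually.of_forall fun p => ?_)
    · apply Measurable.aestronglyMeasurable
      unfold Function.uncurry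
      have := hhm.measurable
      have := θ.continuous.measurable
      fun_prop
    · simp only [Function.uncurry]
      rw [norm_mul, Complex.norm_exp_ofReal_mul_I, one_mul, norm_mul, norm_mul, norm_mul, norm_mul]
      have : ‖(Complex.exp (Complex.I * ↑(2 * Real.pi * p.1 * p.2)) - 1)
          / (2 * Real.pi * p.2 * Complex.I)‖ ≤ ‖(p.1 : ℂ)‖ := by
        rw [norm_div]
        refine div_le_of_le_mul₀ (norm_nonneg _) (norm_nonneg _) ?_
        refine Real.norm_exp_I_mul_ofReal_sub_one_le.trans_eq ?_
        simp [abs_of_pos Real.pi_pos]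
        ring
      calc _ ≤ ‖θ (p.1 / T)‖ * (‖𝓕 (⇑g) p.2‖ * ‖(p.1 : ℂ)‖) := by gcongr
        _ = _ := by ring

/-! ### The weighted estimate -/

theorem lintegral_dilate {r : ℝ} (hr : 1 < r) {T : ℝ} (hT : 0 < T) :
    ∫⁻ x : ℝ, ENNReal.ofReal ((1 + |T * x|) ^ (-r))
      = ENNReal.ofReal (T⁻¹ * ∫ x : ℝ, (1 + |x|) ^ (-r)) := by
  have hi : Integrable (fun x : ℝ => (1 + |x|) ^ (-r)) :=
    integrable_one_add_norm (by simpa using hr)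
  rw [← ofReal_integral_eq_lintegral_ofReal (hi.comp_mul_left' hT.ne')
    (Filter.Eventually.of_forall fun x => by positivity),
    Measure.integral_comp_mul_left (fun x : ℝ => (1 + |x|) ^ (-r)), abs_of_pos (inv_pos.2 hT),
    smul_eq_mul]

theorem integrable_weight {b' : ℝ} (hb' : b' ≤ 0) (g : SchwartzMap ℝ ℂ) :
    Integrable (fun τ : ℝ => (1 + |τ|) ^ (2*b') * ‖𝓕 (⇑g) τ‖^2) := by
  have h := ((𝓕 g).memLp 2 volume).integrable_norm_pow (by norm_num)
  rw [SchwartzMap.fourier_coe] at h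
  refine h.bdd_mul (c := 1) (Measurable.aestronglyMeasurable (by fun_prop))
    (Filter.Eventually.of_forall fun τ => ?_)
  rw [Real.norm_of_nonneg (by positivity)]
  exact Real.rpow_le_one_of_one_le_of_nonpos (by linarith [abs_nonneg τ]) (by linarith)

/-- The weighted transform of the localized primitive is dominated by the kernel operator of
`sq_lintegral_kernel_le` applied to `(1 + |ξ|) ^ b' |𝓕 g(ξ)|`. The hypothesis `hK` is the conclusion
of `kernel_bound` for `𝓕 θ`. -/
theorem pointwise_bound {b b' : ℝ} (hb'2 : b' ≤ 0) (hb1 : 0 ≤ b) (hb2 : b ≤ b' + 1)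
    (θ : SchwartzMap ℝ ℂ) {C : ℝ} (hC : 0 < C)
    (hK : ∀ x y : ℝ, y ≠ 0 → ‖𝓕 (⇑θ) (x - y) - 𝓕 (⇑θ) x‖ / (2 * Real.pi * |y|)
      ≤ C * ((1 + |y|) ^ (-1 : ℝ) * ((1 + |x - y|) ^ (-3 : ℝ) + (1 + |x|) ^ (-3 : ℝ))))
    {T : ℝ} (hT : 0 < T) (hT1 : T ≤ 1) (g : SchwartzMap ℝ ℂ) (τ : ℝ) :
    ENNReal.ofReal ((1 + |τ|) ^ b *
        ‖𝓕 (fun t : ℝ => θ (t / T) * ∫ t' in (0:ℝ)..t, g t') τ‖)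
      ≤ ∫⁻ ξ : ℝ, (ENNReal.ofReal (C * T ^ (2 + b' - b) * (1 + |T * (τ - ξ)|) ^ (-2 : ℝ))
          + ENNReal.ofReal (C * T ^ (2 + b' - b) * (1 + |T * τ|) ^ (-2 : ℝ))
            * ENNReal.ofReal ((1 + |T * ξ|) ^ (-(1 + b'))))
          * ENNReal.ofReal ((1 + |ξ|) ^ b' * ‖𝓕 (⇑g) ξ‖) := by
  rw [fourier_localized_primitive θ g hT, ENNReal.ofReal_mul (by positivity), ofReal_norm]
  refine (mul_le_mul_right (enorm_integral_le_lintegral_enorm _) _).trans ?_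
  rw [← lintegral_const_mul' _ _ ENNReal.ofReal_ne_top]
  have h0 : ∀ᵐ ξ : ℝ, ξ ≠ 0 := by simp [ae_iff, measure_singleton]
  refine lintegral_mono_ae ?_
  filter_upwards [h0] with ξ hξ
  rw [← ofReal_norm, ← ENNReal.ofReal_mul (by positivity), ← ENNReal.ofReal_mul (by positivity),
    ← ENNReal.ofReal_add (by positivity) (by positivity), ← ENNReal.ofReal_mul (by positivity)]
  refine ENNReal.ofReal_le_ofReal ?_
  set D := ‖𝓕 (⇑θ) (T * τ - T * ξ) - 𝓕 (⇑θ) (T * τ)‖ with hD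
  have hTξ : T * ξ ≠ 0 := mul_ne_zero hT.ne' hξ
  have e1 : ‖(T * (𝓕 (⇑θ) (T * τ - T * ξ) - 𝓕 (⇑θ) (T * τ))
      / (2 * Real.pi * ξ * Complex.I) : ℂ)‖ = T ^ 2 * (D / (2 * Real.pi * |T * ξ|)) := by
    have hξ' : |ξ| ≠ 0 := abs_ne_zero.2 hξ
    simp only [norm_div, norm_mul, Complex.norm_real, Complex.norm_I, Complex.norm_ofNat,
      Real.norm_eq_abs, abs_of_pos hT, abs_of_pos Real.pi_pos, ← hD, abs_mul]
    field_simp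
  rw [norm_mul, e1]
  have hw := weighted_kernel_bound hb'2 hb1 hb2 hT hT1 τ ξ
  have e2 : T ^ (2 + b' - b) = T ^ 2 * T ^ (b' - b) := by
    rw [← Real.rpow_two, ← Real.rpow_add hT]; congr 1; ring
  rw [e2]
  calc (1 + |τ|) ^ b * (‖𝓕 (⇑g) ξ‖ * (T ^ 2 * (D / (2 * Real.pi * |T * ξ|))))
      ≤ (1 + |τ|) ^ b * (‖𝓕 (⇑g) ξ‖ * (T ^ 2 * (C * ((1 + |T * ξ|) ^ (-1 : ℝ) *
        ((1 + |T * τ - T * ξ|) ^ (-3 : ℝ) + (1 + |T * τ|) ^ (-3 : ℝ)))))) := by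
        gcongr
        exact hK _ _ hTξ
    _ = C * T ^ 2 * ‖𝓕 (⇑g) ξ‖ * ((1 + |τ|) ^ b * ((1 + |T * ξ|) ^ (-1 : ℝ) *
        ((1 + |T * τ - T * ξ|) ^ (-3 : ℝ) + (1 + |T * τ|) ^ (-3 : ℝ)))) := by ring
    _ ≤ C * T ^ 2 * ‖𝓕 (⇑g) ξ‖ * (T ^ (b' - b) * ((1 + |T * (τ - ξ)|) ^ (-2 : ℝ)
        + (1 + |T * τ|) ^ (-2 : ℝ) * (1 + |T * ξ|) ^ (-(1 + b'))) * (1 + |ξ|) ^ b') := by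
        gcongr
    _ = _ := by ring

theorem sq_weight (s x y : ℝ) : (1 + |x|) ^ (2 * s) * y ^ 2 = ((1 + |x|) ^ s * y) ^ 2 := by
  rw [mul_pow, ← Real.rpow_natCast ((1 + |x|) ^ s), ← Real.rpow_mul (by positivity)]
  push_cast
  rw [mul_comm s]

/-- The estimate between squared norms, for an arbitrary Schwartz cutoff `θ`. -/
theorem squared_estimate {b b' : ℝ} (hb'1 : -1/2 < b') (hb'2 : b' ≤ 0) (hb1 : 0 ≤ b)
    (hb2 : b ≤ b' + 1) (θ : SchwartzMap ℝ ℂ) :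
    ∃ c > 0, ∀ T : ℝ, 0 < T → T ≤ 1 → ∀ g : SchwartzMap ℝ ℂ,
      ∫ τ : ℝ, (1 + |τ|) ^ (2*b) *
          ‖𝓕 (fun t : ℝ => θ (t/T) * ∫ t' in (0:ℝ)..t, g t') τ‖^2
        ≤ c * (T ^ (1 - (b - b'))) ^ 2 *
          ∫ τ : ℝ, (1 + |τ|) ^ (2*b') * ‖𝓕 (⇑g) τ‖^2 := by
  obtain ⟨C, hC, hK⟩ := kernel_bound (𝓕 θ)
  rw [SchwartzMap.fourier_coe] at hK
  set Φ₁ := ∫ x : ℝ, (1 + |x|) ^ (-2 : ℝ) with hΦ₁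
  set Φ₂ := ∫ x : ℝ, (1 + |x|) ^ (-4 : ℝ) with hΦ₂
  set Ψ := ∫ x : ℝ, (1 + |x|) ^ (-(2 * (1 + b'))) with hΨ
  have hΦ₁0 : 0 ≤ Φ₁ := integral_nonneg fun x => by positivity
  have hΦ₂0 : 0 ≤ Φ₂ := integral_nonneg fun x => by positivity
  have hΨ0 : 0 ≤ Ψ := integral_nonneg fun x => by positivity
  refine ⟨2 * C ^ 2 * (Φ₁ ^ 2 + Φ₂ * Ψ) + 1, by positivity, fun T hT hT1 g => ?_⟩
  set R := ∫ τ : ℝ, (1 + |τ|) ^ (2*b') * ‖𝓕 (⇑g) τ‖^2 with hR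
  have hR0 : 0 ≤ R := integral_nonneg fun x => by positivity
  by_cases hI : Integrable (fun τ : ℝ => (1 + |τ|) ^ (2*b) *
          ‖𝓕 (fun t : ℝ => θ (t/T) * ∫ t' in (0:ℝ)..t, g t') τ‖^2)
  -- A non-integrable left-hand side has integral `0` by convention.
  swap
  · rw [integral_undef hI]; positivity
  set κ := C * T ^ (2 + b' - b) with hκ
  have hκ0 : 0 < κ := by positivity
  have hhm : Measurable (𝓕 (⇑g)) := by
    rw [← SchwartzMap.fourier_coe]; exact (SchwartzMap.continuous _).measurable
  have hA : ∫⁻ x : ℝ, ENNReal.ofReal (κ * (1 + |T * x|) ^ (-2 : ℝ))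
      = ENNReal.ofReal (κ * (T⁻¹ * Φ₁)) := by
    simp_rw [ENNReal.ofReal_mul hκ0.le]
    rw [lintegral_const_mul _ (by fun_prop), lintegral_dilate (by norm_num) hT,
      ENNReal.ofReal_mul (by positivity)]
  have hB : ∫⁻ x : ℝ, ENNReal.ofReal (κ * (1 + |T * x|) ^ (-2 : ℝ)) ^ 2
      = ENNReal.ofReal (κ ^ 2 * (T⁻¹ * Φ₂)) := by
    have : ∀ x : ℝ, ENNReal.ofReal (κ * (1 + |T * x|) ^ (-2 : ℝ)) ^ 2
        = ENNReal.ofReal (κ ^ 2) * ENNReal.ofReal ((1 + |T * x|) ^ (-4 : ℝ)) := by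
      intro x
      rw [← ENNReal.ofReal_pow (by positivity), ← ENNReal.ofReal_mul (by positivity), mul_pow,
        ← Real.rpow_natCast ((1 + |T * x|) ^ (-2 : ℝ)), ← Real.rpow_mul (by positivity)]
      norm_num
    simp_rw [this]
    rw [lintegral_const_mul _ (by fun_prop), lintegral_dilate (by norm_num) hT,
      ENNReal.ofReal_mul (p := κ ^ 2) (by positivity)]
  have hD : ∫⁻ x : ℝ, ENNReal.ofReal ((1 + |T * x|) ^ (-(1 + b'))) ^ 2
      = ENNReal.ofReal (T⁻¹ * Ψ) := by
    rw [hΨ, ← lintegral_dilate (by linarith) hT]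
    refine lintegral_congr fun x => ?_
    rw [← ENNReal.ofReal_pow (by positivity), ← Real.rpow_natCast, ← Real.rpow_mul (by positivity)]
    congr 2; push_cast; ring
  have hU : ∫⁻ ξ : ℝ, ENNReal.ofReal ((1 + |ξ|) ^ b' * ‖𝓕 (⇑g) ξ‖) ^ 2 = ENNReal.ofReal R := by
    rw [hR, ofReal_integral_eq_lintegral_ofReal (integrable_weight hb'2 g)
      (Filter.Eventually.of_forall fun x => by positivity)]
    refine lintegral_congr fun ξ => ?_
    rw [← ENNReal.ofReal_pow (by positivity), sq_weight]
  have hmain : ENNReal.ofReal (∫ τ : ℝ, (1 + |τ|) ^ (2*b) *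
          ‖𝓕 (fun t : ℝ => θ (t/T) * ∫ t' in (0:ℝ)..t, g t') τ‖^2)
      ≤ ENNReal.ofReal (2 * ((κ * (T⁻¹ * Φ₁)) ^ 2
        + κ ^ 2 * (T⁻¹ * Φ₂) * (T⁻¹ * Ψ)) * R) := by
    rw [ofReal_integral_eq_lintegral_ofReal hI
      (Filter.Eventually.of_forall fun x => by positivity)]
    have hs := sq_lintegral_kernel_le
      (A := fun x => ENNReal.ofReal (κ * (1 + |T * x|) ^ (-2 : ℝ)))
      (B := fun x => ENNReal.ofReal (κ * (1 + |T * x|) ^ (-2 : ℝ)))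
      (D := fun x => ENNReal.ofReal ((1 + |T * x|) ^ (-(1 + b'))))
      (u := fun ξ => ENNReal.ofReal ((1 + |ξ|) ^ b' * ‖𝓕 (⇑g) ξ‖))
      (by fun_prop) (by fun_prop) (by fun_prop) (by fun_prop)
    rw [hA, hB, hD, hU] at hs
    rw [ENNReal.ofReal_mul (by positivity), ENNReal.ofReal_mul (by positivity),
      ENNReal.ofReal_add (by positivity) (by positivity), ENNReal.ofReal_pow (by positivity),
      ENNReal.ofReal_mul (p := κ ^ 2 * (T⁻¹ * Φ₂)) (by positivity), ENNReal.ofReal_ofNat]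
    refine le_trans (lintegral_mono fun τ => ?_) hs
    rw [sq_weight, ENNReal.ofReal_pow (by positivity)]
    exact pow_le_pow_left' (pointwise_bound hb'2 hb1 hb2 θ hC hK hT hT1 g τ) 2
  rw [ENNReal.ofReal_le_ofReal_iff (by positivity)] at hmain
  refine hmain.trans ?_
  have e3 : κ * T⁻¹ = C * T ^ (1 - (b - b')) := by
    rw [hκ, mul_assoc, ← Real.rpow_neg_one, ← Real.rpow_add hT]; congr 2; ring
  calc 2 * ((κ * (T⁻¹ * Φ₁)) ^ 2 + κ ^ 2 * (T⁻¹ * Φ₂) * (T⁻¹ * Ψ)) * R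
      = 2 * (κ * T⁻¹) ^ 2 * (Φ₁ ^ 2 + Φ₂ * Ψ) * R := by ring
    _ = (2 * C ^ 2 * (Φ₁ ^ 2 + Φ₂ * Ψ)) * (T ^ (1 - (b - b'))) ^ 2 * R := by rw [e3]; ring
    _ ≤ _ := by gcongr; linarith

/-- Lemma 2.2(i): time-localized integration estimate in the Sobolev spaces
`H^b(ℝ)` defined via the Fourier transform, with the gain `T^{1-(b-b')}`. -/
theorem time_localized_integration (b b' : ℝ)
    (hb'1 : -1/2 < b') (hb'2 : b' ≤ 0) (hb1 : 0 ≤ b) (hb2 : b ≤ b' + 1)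
    (θ : ℝ → ℝ) (hθs : ContDiff ℝ (⊤ : ℕ∞) θ) (hθc : HasCompactSupport θ)
    (hθ0 : ∀ t, 0 ≤ θ t) (hθ1 : ∀ t, θ t ≤ 1)
    (hθeq : ∀ t ∈ Set.Icc (-1:ℝ) 1, θ t = 1)
    (hθsupp : Function.support θ ⊆ Set.Icc (-2:ℝ) 2) :
    ∃ c > 0, ∀ T : ℝ, 0 < T → T ≤ 1 → ∀ g : SchwartzMap ℝ ℂ,
      (∫ τ : ℝ, (1 + |τ|) ^ (2*b) *
          ‖𝓕 (fun t : ℝ => (θ (t/T) : ℂ) * ∫ t' in (0:ℝ)..t, g t') τ‖^2) ^ ((1:ℝ)/2)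
        ≤ c * T ^ (1 - (b - b')) *
          (∫ τ : ℝ, (1 + |τ|) ^ (2*b') * ‖𝓕 (⇑g) τ‖^2) ^ ((1:ℝ)/2) := by
  have hc : HasCompactSupport (fun t => (θ t : ℂ)) :=
    HasCompactSupport.comp_left (g := fun x : ℝ => (x : ℂ)) hθc (by simp)
  have hs : ContDiff ℝ (⊤ : ℕ∞) (fun t => (θ t : ℂ)) := Complex.ofRealCLM.contDiff.comp hθs
  obtain ⟨c, hc0, h⟩ := squared_estimate hb'1 hb'2 hb1 hb2 (hc.toSchwartzMap hs)
  refine ⟨c ^ ((1:ℝ)/2), by positivity, fun T hT hT1 g => ?_⟩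
  have hR0 : 0 ≤ ∫ τ : ℝ, (1 + |τ|) ^ (2*b') * ‖𝓕 (⇑g) τ‖^2 :=
    integral_nonneg fun x => by positivity
  refine (Real.rpow_le_rpow (integral_nonneg fun x => by positivity) (h T hT hT1 g)
    (by norm_num)).trans_eq ?_
  rw [Real.mul_rpow (by positivity) hR0, Real.mul_rpow hc0.le (by positivity)]
  congr 2
  rw [← Real.sqrt_eq_rpow, Real.sqrt_sq (by positivity)]
end
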